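/- Suppose that p = p(n) ≥ 1/log² n. Then asymptotically almost surely pt_pzf(G(n,p)) ≥ (1+o(1)) log₂ log₂ n, where pt_pzf(G(n,p)) = min over all vertices v of pt_pzf(G(n,p), v), the minimum being taken over n independent runs of probabilistic zero forcing, one started from each vertex. -/

import Mathlib

open Finset Filter Real
open scoped Classical

namespace PZF

variable {V : Type*} [Fintype V] [DecidableEq V]

/-- The closed degree of `u` into the set `B`, i.e. `|N[u] ∩ B|`. -/
noncomputable def closedDegIn (G : SimpleGraph V) (B : Finset V) (u : V) : ℕ :=
  ((insert u (G.neighborSet u)) ∩ (B : Set V)).ncard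

/-- The degree of `u` in `G`. -/
noncomputable def deg (G : SimpleGraph V) (u : V) : ℕ :=
  (G.neighborSet u).ncard

/-- The probability that the blue vertex `u` forces its white neighbour `v` in one round of
probabilistic zero forcing, when the current blue set is `B`: it equals `|N[u] ∩ B| / deg u`
when `u` is blue, `v` is a white neighbour of `u`, and `0` otherwise. -/
noncomputable def edgeForceProb (G : SimpleGraph V) (B : Finset V) (u v : V) : ℝ :=
  if G.Adj u v ∧ u ∈ B ∧ v ∉ B then (closedDegIn G B u : ℝ) / (deg G u : ℝ) else 0

/-- Given per-ordered-pair forcing probabilities `q u v` (each attempt independent), the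
probability that one round starting from the blue set `B` produces exactly the blue set `B'`. -/
noncomputable def stepOfQ (q : V → V → ℝ) (B B' : Finset V) : ℝ :=
  if B ⊆ B' then
    (∏ v ∈ B' \ B, (1 - ∏ u ∈ B, (1 - q u v))) * ∏ v ∈ B'ᶜ, ∏ u ∈ B, (1 - q u v)
  else 0

/-- The transition rule of standard probabilistic zero forcing, as a function of the history
(the list of blue sets so far; only the current blue set matters). -/
noncomputable def stdStep (G : SimpleGraph V) (hist : List (Finset V)) (B' : Finset V) : ℝ :=
  stepOfQ (edgeForceProb G (hist.getLastD ∅)) (hist.getLastD ∅) B'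

/-- Probability of a given future trajectory, given the history so far. -/
noncomputable def seqProbAux (step : List (Finset V) → Finset V → ℝ) :
    List (Finset V) → List (Finset V) → ℝ
  | _, [] => 1
  | hist, B :: rest => step hist B * seqProbAux step (hist ++ [B]) rest

/-- The probability that, running the process given by the transition rule `step` from the
initial blue set `S` for `ℓ` rounds, the resulting trajectory (including the initial set)
satisfies the predicate `E`. -/
noncomputable def trajEventProb (step : List (Finset V) → Finset V → ℝ) (S : Finset V)
    (ℓ : ℕ) (E : List (Finset V) → Prop) : ℝ :=
  ∑ f : Fin ℓ → Finset V,
    if E (S :: List.ofFn f) then seqProbAux step [S] (List.ofFn f) else 0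

/-- `P(A(S,T,ℓ))`: the probability that, starting probabilistic zero forcing from the blue
set `S`, after `ℓ` rounds every vertex of `T` is blue. -/
noncomputable def probForced (G : SimpleGraph V) (S T : Finset V) (ℓ : ℕ) : ℝ :=
  trajEventProb (stdStep G) S ℓ fun traj => T ⊆ traj.getLastD ∅

/-- `P(pt_pzf(G,S) ≤ ℓ)`: the probability that all vertices are blue after `ℓ` rounds. -/
noncomputable def probAllBlue (G : SimpleGraph V) (S : Finset V) (ℓ : ℕ) : ℝ :=
  probForced G S Finset.univ ℓ

/-- The probability of a fixed graph `G` under the Erdős–Rényi measure `G(n,p)`. -/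
noncomputable def erProb (n : ℕ) (p : ℝ) (G : SimpleGraph (Fin n)) : ℝ :=
  p ^ G.edgeSet.ncard * (1 - p) ^ (n.choose 2 - G.edgeSet.ncard)

/-- The probability that `G(n,p)` satisfies the property `E`. -/
noncomputable def graphProb (n : ℕ) (p : ℝ) (E : SimpleGraph (Fin n) → Prop) : ℝ :=
  ∑ G : SimpleGraph (Fin n), if E G then erProb n p G else 0

/-- `P(pt_pzf(G(n,p), v) ≤ ℓ)`: the joint probability (over the random graph and the forcing
randomness) that probabilistic zero forcing started at `{v}` turns all of `G(n,p)` blue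
within `ℓ` rounds. -/
noncomputable def prPZFwithin (n : ℕ) (p : ℝ) (v : Fin n) (ℓ : ℕ) : ℝ :=
  ∑ G : SimpleGraph (Fin n), erProb n p G * probAllBlue G {v} ℓ

/-- `P(pt_pzf(G(n,p)) ≤ ℓ)` where `pt_pzf(G(n,p)) = min_v pt_pzf(G(n,p), v)`, the minimum
taken over `n` independent runs of probabilistic zero forcing, one started from each vertex:
given the graph `G`, the `n` runs are independent, so the minimum exceeds `ℓ` with
probability `∏_v (1 - P(pt_pzf(G, v) ≤ ℓ))`. -/
noncomputable def prMinPZFwithin (n : ℕ) (p : ℝ) (ℓ : ℕ) : ℝ :=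
  ∑ G : SimpleGraph (Fin n),
    erProb n p G * (1 - ∏ v : Fin n, (1 - probAllBlue G {v} ℓ))

end PZF

namespace PZF

lemma sum_superset_prod {V : Type*} [Fintype V] [DecidableEq V] (a b : V → ℝ) (B : Finset V) :
    ∑ B' : Finset V, (if B ⊆ B' then (∏ v ∈ B' \ B, a v) * ∏ v ∈ B'ᶜ, b v else 0)
      = ∏ v ∈ Bᶜ, (a v + b v) := by
  rw [Finset.prod_add, ← Finset.sum_filter]
  refine Finset.sum_bij' (fun B' _ => B' \ B) (fun s _ => B ∪ s) ?_ ?_ ?_ ?_ ?_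
  · intro B' h
    simp only [Finset.mem_powerset]
    intro x hx
    simp at hx ⊢
    exact hx.2
  · intro s h
    simp
  · intro B' h
    simp only [Finset.mem_filter, Finset.mem_univ, true_and] at h
    simp [h]
  · intro s h
    simp only [Finset.mem_powerset] at h
    ext x
    have := @h x
    simp at this ⊢
    tauto
  · intro B' h
    simp only [Finset.mem_filter, Finset.mem_univ, true_and] at h
    congr 1
    apply Finset.prod_congr _ (fun _ _ => rfl)
    ext x
    have := @h x
    simp
    tauto

section
variable {V : Type*} [Fintype V] [DecidableEq V] (G : SimpleGraph V) (B : Finset V)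

lemma edgeForceProb_nonneg (u v : V) : 0 ≤ edgeForceProb G B u v := by
  unfold edgeForceProb
  split_ifs <;> positivity

lemma edgeForceProb_le_one (u v : V) : edgeForceProb G B u v ≤ 1 := by
  unfold edgeForceProb
  split_ifs with h
  · apply div_le_one_of_le₀ _ (by positivity)
    obtain ⟨h1, h2, h3⟩ := h
    have hsub : ((insert u (G.neighborSet u)) ∩ (B : Set V)) ⊆
        insert u (G.neighborSet u \ {v}) := by
      intro x hx
      simp only [Set.mem_inter_iff, Set.mem_insert_iff, Finset.mem_coe, Set.mem_diff,
        Set.mem_singleton_iff] at hx ⊢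
      rcases hx with ⟨hx | hx, hB⟩
      · exact Or.inl hx
      · refine Or.inr ⟨hx, ?_⟩
        rintro rfl
        exact h3 hB
    have h4 := Set.ncard_le_ncard hsub (Set.toFinite _)
    have h5 := Set.ncard_insert_le u (G.neighborSet u \ {v})
    have h6 : (G.neighborSet u \ {v}).ncard + 1 = (G.neighborSet u).ncard :=
      Set.ncard_diff_singleton_add_one (by simpa using h1) (Set.toFinite _)
    unfold closedDegIn deg
    exact_mod_cast (by omega : ((insert u (G.neighborSet u)) ∩ (B : Set V)).ncard ≤ (G.neighborSet u).ncard)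
  · norm_num

lemma sum_edgeForceProb_le (u : V) : ∑ v ∈ Bᶜ, edgeForceProb G B u v ≤ (B.card : ℝ) := by
  have hcd : (closedDegIn G B u : ℝ) ≤ B.card := by
    unfold closedDegIn
    have := Set.ncard_le_ncard (Set.inter_subset_right : ((insert u (G.neighborSet u)) ∩ (B : Set V)) ⊆ B)
      (Set.toFinite _)
    rw [Set.ncard_coe_finset] at this
    exact_mod_cast this
  have h1 : ∑ v ∈ Bᶜ, edgeForceProb G B u v ≤
      ∑ v : V, if v ∈ G.neighborSet u then (closedDegIn G B u : ℝ) / (deg G u : ℝ) else 0 := by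
    refine (Finset.sum_le_sum_of_subset_of_nonneg (Finset.subset_univ _)
      (fun v _ _ => edgeForceProb_nonneg G B u v)).trans ?_
    apply Finset.sum_le_sum
    intro v _
    unfold edgeForceProb
    simp only [SimpleGraph.mem_neighborSet]
    split_ifs with h1 h2 h2
    · exact le_rfl
    · exact absurd h1.1 h2
    · positivity
    · exact le_rfl
  refine h1.trans ?_
  rw [← Finset.sum_filter, Finset.sum_const, nsmul_eq_mul]
  have h2 : (Finset.univ.filter (fun v => v ∈ G.neighborSet u)).card = deg G u := by
    unfold deg
    rw [← Set.ncard_coe_finset]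
    congr 1
    ext x
    simp
  rw [h2]
  by_cases h0 : (deg G u : ℝ) = 0
  · rw [h0]; simp
  · rw [mul_div_cancel₀ _ h0]
    exact hcd

/-- Probability that `v` stays white. -/
noncomputable def stay (v : V) : ℝ := ∏ u ∈ B, (1 - edgeForceProb G B u v)

lemma stay_nonneg (v : V) : 0 ≤ stay G B v :=
  Finset.prod_nonneg fun u _ => sub_nonneg.2 (edgeForceProb_le_one G B u v)

lemma stay_le_one (v : V) : stay G B v ≤ 1 :=
  Finset.prod_le_one (fun u _ => sub_nonneg.2 (edgeForceProb_le_one G B u v))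
    fun u _ => by linarith [edgeForceProb_nonneg G B u v]

lemma one_sub_prod_le {ι : Type*} (s : Finset ι) (a : ι → ℝ) (h0 : ∀ i, 0 ≤ a i)
    (h1 : ∀ i, a i ≤ 1) : 1 - ∏ i ∈ s, (1 - a i) ≤ ∑ i ∈ s, a i := by
  induction s using Finset.induction_on with
  | empty => simp
  | insert i s hi ih =>
    rw [Finset.prod_insert hi, Finset.sum_insert hi]
    have h2 : ∏ j ∈ s, (1 - a j) ≤ 1 :=
      Finset.prod_le_one (fun j _ => sub_nonneg.2 (h1 j)) fun j _ => by linarith [h0 j]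
    nlinarith [h0 i, h1 i]

lemma sum_stay_le : ∑ v ∈ Bᶜ, (1 - stay G B v) ≤ (B.card : ℝ) ^ 2 := by
  calc _ ≤ ∑ v ∈ Bᶜ, ∑ u ∈ B, edgeForceProb G B u v :=
        Finset.sum_le_sum fun v _ => one_sub_prod_le B _ (fun u => edgeForceProb_nonneg G B u v)
          (fun u => edgeForceProb_le_one G B u v)
    _ = ∑ u ∈ B, ∑ v ∈ Bᶜ, edgeForceProb G B u v := Finset.sum_comm
    _ ≤ ∑ u ∈ B, (B.card : ℝ) := Finset.sum_le_sum fun u _ => sum_edgeForceProb_le G B u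
    _ = _ := by rw [Finset.sum_const, nsmul_eq_mul]; ring

/-- One step transition probability. -/
noncomputable def tr (B' : Finset V) : ℝ := stepOfQ (edgeForceProb G B) B B'

lemma tr_eq (B' : Finset V) : tr G B B' = if B ⊆ B' then
    (∏ v ∈ B' \ B, (1 - stay G B v)) * ∏ v ∈ B'ᶜ, stay G B v else 0 := rfl

lemma tr_nonneg (B' : Finset V) : 0 ≤ tr G B B' := by
  rw [tr_eq]
  split_ifs
  · exact mul_nonneg (Finset.prod_nonneg fun v _ => sub_nonneg.2 (stay_le_one G B v))
      (Finset.prod_nonneg fun v _ => stay_nonneg G B v)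
  · exact le_rfl

lemma sum_tr : ∑ B' : Finset V, tr G B B' = 1 := by
  simp only [tr_eq]
  rw [sum_superset_prod]
  simp

lemma sum_tr_exp : ∑ B' : Finset V, tr G B B' * Real.exp ((B' \ B).card : ℝ)
    ≤ Real.exp (2 * (B.card : ℝ) ^ 2) := by
  have h : ∀ B' : Finset V, tr G B B' * Real.exp ((B' \ B).card : ℝ) = if B ⊆ B' then
    (∏ v ∈ B' \ B, (Real.exp 1 * (1 - stay G B v))) * ∏ v ∈ B'ᶜ, stay G B v else 0 := by
    intro B'
    rw [tr_eq]
    split_ifs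
    · rw [Finset.prod_mul_distrib, Finset.prod_const, ← Real.exp_nat_mul, mul_one]
      ring
    · simp
  simp only [h]
  rw [sum_superset_prod]
  calc _ ≤ ∏ v ∈ Bᶜ, Real.exp (2 * (1 - stay G B v)) := by
        apply Finset.prod_le_prod
        · intro v _
          have := stay_nonneg G B v
          have := stay_le_one G B v
          have := mul_nonneg (Real.exp_pos 1).le (sub_nonneg.2 this)
          linarith
        · intro v _
          refine le_trans ?_ (Real.add_one_le_exp _)
          have := stay_le_one G B v
          nlinarith [Real.exp_one_lt_d9]
    _ = Real.exp (2 * ∑ v ∈ Bᶜ, (1 - stay G B v)) := by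
        rw [← Real.exp_sum, Finset.mul_sum]
    _ ≤ _ := by
        apply Real.exp_le_exp.2
        linarith [sum_stay_le G B]

lemma tail (M : ℝ) (hM : 1 ≤ M) (hB : (B.card : ℝ) ≤ M) :
    ∑ B' : Finset V, (if 5 * M ^ 2 < (B'.card : ℝ) then tr G B B' else 0)
      ≤ Real.exp (-M ^ 2) := by
  have hb0 : (0:ℝ) ≤ B.card := by positivity
  calc _ ≤ ∑ B' : Finset V, (tr G B B' * Real.exp ((B' \ B).card : ℝ)) * Real.exp (-(4 * M ^ 2)) := by
        apply Finset.sum_le_sum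
        intro B' _
        have h0 := tr_nonneg G B B'
        split_ifs with h
        · rw [mul_assoc, ← Real.exp_add]
          apply le_mul_of_one_le_right h0
          apply Real.one_le_exp
          have : B'.card ≤ (B' \ B).card + B.card := by
            have := Finset.le_card_sdiff B B'
            omega
          have : (B'.card : ℝ) ≤ (B' \ B).card + B.card := by exact_mod_cast this
          nlinarith
        · positivity
    _ ≤ Real.exp (2 * (B.card : ℝ) ^ 2) * Real.exp (-(4 * M ^ 2)) := by
        rw [← Finset.sum_mul]
        exact mul_le_mul_of_nonneg_right (sum_tr_exp G B) (Real.exp_pos _).le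
    _ ≤ _ := by
        rw [← Real.exp_add]
        apply Real.exp_le_exp.2
        nlinarith
end

/-- Recursive form of the all-blue probability. -/
noncomputable def blueRec {V : Type*} [Fintype V] [DecidableEq V] (G : SimpleGraph V) :
    ℕ → Finset V → ℝ
  | 0, B => if Finset.univ ⊆ B then 1 else 0
  | k + 1, B => ∑ B' : Finset V, tr G B B' * blueRec G k B'

section
variable {V : Type*} [Fintype V] [DecidableEq V] (G : SimpleGraph V)

lemma blueRec_nonneg (k : ℕ) (B : Finset V) : 0 ≤ blueRec G k B := by
  induction k generalizing B with
  | zero => simp only [blueRec]; split_ifs <;> norm_num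
  | succ k ih => exact Finset.sum_nonneg fun B' _ => mul_nonneg (tr_nonneg G B B') (ih B')

lemma blueRec_le_one (k : ℕ) (B : Finset V) : blueRec G k B ≤ 1 := by
  induction k generalizing B with
  | zero => simp only [blueRec]; split_ifs <;> norm_num
  | succ k ih =>
    rw [← sum_tr G B]
    exact Finset.sum_le_sum fun B' _ => mul_le_of_le_one_right (tr_nonneg G B B') (ih B')

lemma traj_eq (ℓ : ℕ) (S : Finset V) (hist : List (Finset V)) :
    (∑ f : Fin ℓ → Finset V, if Finset.univ ⊆ (hist ++ (S :: List.ofFn f)).getLastD ∅ then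
      seqProbAux (stdStep G) (hist ++ [S]) (List.ofFn f) else 0) = blueRec G ℓ S := by
  induction ℓ generalizing S hist with
  | zero => simp [blueRec, seqProbAux, List.getLastD_eq_getLast?]
  | succ k ih =>
    rw [← (Fin.consEquiv (fun _ : Fin (k+1) => Finset V)).sum_comp, Fintype.sum_prod_type]
    simp only [blueRec]
    apply Finset.sum_congr rfl
    intro B' _
    rw [← ih B' (hist ++ [S]), Finset.mul_sum]
    apply Finset.sum_congr rfl
    intro f _
    simp only [Fin.consEquiv, Equiv.coe_fn_mk, List.ofFn_succ, Fin.cons_zero, Fin.cons_succ,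
      seqProbAux, List.append_assoc, List.singleton_append]
    rw [mul_ite, mul_zero]
    have : stdStep G (hist ++ [S]) B' = tr G S B' := by
      simp [stdStep, tr, List.getLastD_eq_getLast?]
    rw [this]
    

lemma probAllBlue_eq (ℓ : ℕ) (S : Finset V) : probAllBlue G S ℓ = blueRec G ℓ S := by
  rw [← traj_eq G ℓ S []]
  unfold probAllBlue probForced trajEventProb
  apply Finset.sum_congr rfl
  intro f _
  simp only [List.nil_append]
  congr

lemma blueRec_bound (k : ℕ) (B : Finset V) (M : ℝ) (hM : 1 ≤ M) (hB : (B.card : ℝ) ≤ M)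
    (hn : (5 * M) ^ (2 ^ k) < 5 * (Fintype.card V : ℝ)) :
    blueRec G k B ≤ k * Real.exp (-M ^ 2) := by
  induction k generalizing B M with
  | zero =>
    simp only [blueRec]
    rw [if_neg]
    · simp
    · intro h
      have : B = Finset.univ := Finset.univ_subset_iff.1 h
      rw [this, Finset.card_univ] at hB
      simp at hn
      linarith
  | succ k ih =>
    simp only [blueRec]
    have key : ∀ B' : Finset V, tr G B B' * blueRec G k B' ≤
        tr G B B' * (k * Real.exp (-M ^ 2)) +
        (if 5 * M ^ 2 < (B'.card : ℝ) then tr G B B' else 0) := by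
      intro B'
      have h0 := tr_nonneg G B B'
      split_ifs with h
      · have := mul_le_of_le_one_right h0 (blueRec_le_one G k B')
        have : 0 ≤ tr G B B' * (k * Real.exp (-M ^ 2)) := by positivity
        linarith
      · rw [add_zero]
        apply mul_le_mul_of_nonneg_left _ h0
        refine (ih B' (5 * M ^ 2) (by nlinarith) (not_lt.1 h) ?_).trans ?_
        · refine lt_of_eq_of_lt ?_ hn
          rw [pow_succ' 2 k, pow_mul]
          congr 1
          ring
        · gcongr
          nlinarith
    refine (Finset.sum_le_sum fun B' _ => key B').trans ?_
    rw [Finset.sum_add_distrib, ← Finset.sum_mul, sum_tr]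
    have := tail G B M hM hB
    push_cast
    linarith
end

lemma erProb_nonneg (n : ℕ) (p : ℝ) (h0 : 0 ≤ p) (h1 : p ≤ 1) (G : SimpleGraph (Fin n)) :
    0 ≤ erProb n p G :=
  mul_nonneg (pow_nonneg h0 _) (pow_nonneg (sub_nonneg.2 h1) _)

lemma sum_erProb_le (n : ℕ) (p : ℝ) (h0 : 0 ≤ p) (h1 : p ≤ 1) :
    ∑ G : SimpleGraph (Fin n), erProb n p G ≤ 1 := by
  have hc : (⊤ : SimpleGraph (Fin n)).edgeFinset.card = n.choose 2 := by
    rw [SimpleGraph.card_edgeFinset_top_eq_card_choose_two, Fintype.card_fin]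
  have h := Finset.sum_pow_mul_eq_add_pow p (1 - p) (⊤ : SimpleGraph (Fin n)).edgeFinset
  rw [hc, add_sub_cancel, one_pow] at h
  rw [← h]
  have hinj : Function.Injective (fun G : SimpleGraph (Fin n) => G.edgeFinset) := by
    intro G H hGH
    exact SimpleGraph.edgeFinset_inj.1 hGH
  have : ∑ G : SimpleGraph (Fin n), erProb n p G =
      ∑ s ∈ Finset.univ.image (fun G : SimpleGraph (Fin n) => G.edgeFinset),
        p ^ s.card * (1 - p) ^ (n.choose 2 - s.card) := by
    rw [Finset.sum_image (fun a _ b _ hab => hinj hab)]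
    apply Finset.sum_congr rfl
    intro G _
    unfold erProb
    rw [← SimpleGraph.coe_edgeFinset, Set.ncard_coe_finset]
  rw [this]
  apply Finset.sum_le_sum_of_subset_of_nonneg
  · intro s hs
    simp only [Finset.mem_image, Finset.mem_univ, true_and] at hs
    obtain ⟨G, rfl⟩ := hs
    rw [Finset.mem_powerset]
    exact SimpleGraph.edgeFinset_mono le_top
  · intro s _ _
    exact mul_nonneg (pow_nonneg h0 _) (pow_nonneg (sub_nonneg.2 h1) _)

lemma prMin_nonneg (n : ℕ) (p : ℝ) (h0 : 0 ≤ p) (h1 : p ≤ 1) (ℓ : ℕ) :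
    0 ≤ prMinPZFwithin n p ℓ := by
  refine Finset.sum_nonneg fun G _ => mul_nonneg (erProb_nonneg n p h0 h1 G) ?_
  rw [sub_nonneg]
  simp only [probAllBlue_eq]
  exact Finset.prod_le_one (fun v _ => sub_nonneg.2 (blueRec_le_one G _ _))
    fun v _ => by linarith [blueRec_nonneg G ℓ {v}]

lemma prMin_le (n : ℕ) (p : ℝ) (h0 : 0 ≤ p) (h1 : p ≤ 1) (ℓ : ℕ) (M : ℝ) (hM : 1 ≤ M)
    (hn : (5 * M) ^ (2 ^ ℓ) < 5 * (n : ℝ)) :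
    prMinPZFwithin n p ℓ ≤ n * (ℓ * Real.exp (-M ^ 2)) := by
  have key : ∀ G : SimpleGraph (Fin n), (1 - ∏ v : Fin n, (1 - probAllBlue G {v} ℓ)) ≤
      n * (ℓ * Real.exp (-M ^ 2)) := by
    intro G
    simp only [probAllBlue_eq]
    refine (one_sub_prod_le Finset.univ (fun v => blueRec G ℓ {v}) (fun v => blueRec_nonneg G _ _)
      (fun v => blueRec_le_one G _ _)).trans ?_
    refine (Finset.sum_le_sum fun v _ => blueRec_bound G ℓ {v} M hM (by simpa using hM)
      (by simpa using hn)).trans ?_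
    simp
  calc _ ≤ ∑ G : SimpleGraph (Fin n), erProb n p G * (n * (ℓ * Real.exp (-M ^ 2))) :=
        Finset.sum_le_sum fun G _ => mul_le_mul_of_nonneg_left (key G) (erProb_nonneg n p h0 h1 G)
    _ ≤ _ := by
        rw [← Finset.sum_mul]
        exact mul_le_of_le_one_left (by positivity) (sum_erProb_le n p h0 h1)

/-- final numeric estimate -/
lemma final_est (n : ℕ) (p : ℝ) (h0 : 0 ≤ p) (h1 : p ≤ 1) (hn : 0 < n) (x y z : ℝ)
    (hx : x = Real.logb 2 n) (hy : y = Real.logb 2 x) (hz : z = y - Real.logb 2 (3 + y))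
    (hx3 : 3 ≤ x) (hy0 : 0 < y) (hz0 : 0 < z) :
    prMinPZFwithin n p (⌈z⌉₊ - 1) ≤ Real.exp (-x) * x := by
  have hnx : (n : ℝ) = 2 ^ x := by
    rw [hx, Real.rpow_logb (by norm_num) (by norm_num) (by exact_mod_cast hn)]
  have hxy : x = 2 ^ y := by
    rw [hy, Real.rpow_logb (by norm_num) (by norm_num) (by linarith)]
  have hℓ : ((⌈z⌉₊ - 1 : ℕ) : ℝ) < z := by
    have h2 : 0 < ⌈z⌉₊ := Nat.ceil_pos.2 hz0
    have h3 := Nat.ceil_lt_add_one hz0.le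
    rw [Nat.cast_sub h2]
    push_cast
    linarith
  generalize ⌈z⌉₊ - 1 = ℓ at hℓ
  have hlog : 0 < Real.logb 2 (3 + y) := Real.logb_pos (by norm_num) (by linarith)
  have hyx : y ≤ x := by
    rw [hxy]
    have h2 : (1:ℝ) + y * Real.log 2 ≤ 2 ^ y := by
      rw [Real.rpow_def_of_pos (by norm_num)]
      linarith [Real.add_one_le_exp (Real.log 2 * y)]
    have h4 : (2:ℝ) ^ y = ((2:ℝ) ^ (y/2)) ^ 2 := by
      rw [← Real.rpow_natCast, ← Real.rpow_mul (by norm_num)]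
      congr 1; push_cast; ring
    have h5 : (1:ℝ) + (y/2) * Real.log 2 ≤ 2 ^ (y/2) := by
      rw [Real.rpow_def_of_pos (by norm_num)]
      linarith [Real.add_one_le_exp (Real.log 2 * (y/2))]
    have := Real.log_two_gt_d9
    rw [h4]
    have h6 : 1 + y/2 * (1/2) ≤ (2:ℝ) ^ (y/2) := by nlinarith
    nlinarith [sq_nonneg (y - 4), sq_nonneg ((2:ℝ) ^ (y/2) - 2)]
  have hpow : (5 * x) ^ (2 ^ ℓ) < 5 * (n : ℝ) := by
    have h5x : 5 * x ≤ (2:ℝ) ^ (3 + y) := by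
      rw [Real.rpow_add (by norm_num), ← hxy]
      norm_num
      linarith
    have h2l : (2:ℝ) ^ ℓ * (3 + y) ≤ x := by
      have : (3 + y) = (2:ℝ) ^ (Real.logb 2 (3 + y)) := by
        rw [Real.rpow_logb (by norm_num) (by norm_num) (by linarith)]
      calc (2:ℝ) ^ ℓ * (3 + y) = (2:ℝ) ^ ((ℓ:ℝ) + Real.logb 2 (3 + y)) := by
            rw [Real.rpow_add (by norm_num), ← this, Real.rpow_natCast]
        _ ≤ 2 ^ y := Real.rpow_le_rpow_of_exponent_le (by norm_num) (by linarith)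
        _ = x := hxy.symm
    calc (5 * x) ^ (2 ^ ℓ) ≤ ((2:ℝ) ^ (3 + y)) ^ (2 ^ ℓ) :=
          pow_le_pow_left₀ (by linarith) h5x _
      _ = (2:ℝ) ^ ((2:ℝ) ^ ℓ * (3 + y)) := by
          rw [← Real.rpow_natCast, ← Real.rpow_mul (by norm_num)]
          congr 1; push_cast; ring
      _ ≤ 2 ^ x := Real.rpow_le_rpow_of_exponent_le (by norm_num) h2l
      _ = n := hnx.symm
      _ < 5 * n := by
          have : (0:ℝ) < n := by exact_mod_cast hn
          linarith
  refine (prMin_le n p h0 h1 ℓ x (by linarith) hpow).trans ?_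
  have hne : (n : ℝ) ≤ Real.exp x := by
    rw [hnx, Real.rpow_def_of_pos (by norm_num)]
    apply Real.exp_le_exp.2
    nlinarith [Real.log_two_lt_d9]
  have hlx : (ℓ : ℝ) ≤ x := by linarith
  calc (n : ℝ) * (ℓ * Real.exp (-x ^ 2)) ≤ Real.exp x * (x * Real.exp (-x ^ 2)) := by gcongr
    _ = Real.exp (x - x ^ 2) * x := by rw [sub_eq_add_neg, Real.exp_add]; ring
    _ ≤ Real.exp (-x) * x := by
        gcongr
        nlinarith

lemma tendsto_ratio : Tendsto (fun y : ℝ => Real.logb 2 (3 + y) / y) atTop (nhds 0) := by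
  have h1 : Tendsto (fun y : ℝ => Real.log (3 + y) / (3 + y)) atTop (nhds 0) := by
    have := Real.isLittleO_log_id_atTop.tendsto_div_nhds_zero
    exact this.comp (tendsto_atTop_add_const_left _ 3 tendsto_id)
  have h2 : Tendsto (fun y : ℝ => (3 * y⁻¹ + 1) / Real.log 2) atTop (nhds ((3 * 0 + 1) / Real.log 2)) :=
    ((tendsto_inv_atTop_zero.const_mul 3).add_const 1).div_const _
  have h3 := h1.mul h2
  rw [zero_mul] at h3
  refine h3.congr' ?_
  filter_upwards [eventually_gt_atTop 0] with y hy
  have : 0 < Real.log 2 := Real.log_pos (by norm_num)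
  have h3y : 3 + y ≠ 0 := by linarith
  unfold Real.logb
  field_simp

lemma tendsto_zfun : Tendsto (fun y : ℝ => y - Real.logb 2 (3 + y)) atTop atTop := by
  have h1 : Tendsto (fun y : ℝ => (1 - Real.logb 2 (3 + y) / y)) atTop (nhds (1 - 0)) :=
    tendsto_const_nhds.sub tendsto_ratio
  have h2 := Filter.Tendsto.pos_mul_atTop (by norm_num) h1 tendsto_id
  refine h2.congr' ?_
  filter_upwards [eventually_gt_atTop 0] with y hy
  simp only [id]
  field_simp

end PZF

/-- If `p n ≥ 1 / log² n`, then a.a.s.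
`pt_pzf(G(n,p)) ≥ (1 + o(1)) log₂ log₂ n`, where `pt_pzf(G(n,p))` is the minimum over all
vertices `v` of `pt_pzf(G(n,p), v)` for `n` independent runs, one started from each vertex. -/
theorem pzf_min_lower_bound_dense
    (p : ℕ → ℝ) (hp : ∀ n, 0 ≤ p n ∧ p n ≤ 1)
    (hplb : ∀ᶠ n : ℕ in atTop, 1 / Real.log n ^ 2 ≤ p n) :
    ∃ e : ℕ → ℝ,
      Tendsto e atTop (nhds 0) ∧
      Tendsto
        (fun n => PZF.prMinPZFwithin (n + 1) (p (n + 1))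
          (⌈(1 + e n) * Real.logb 2 (Real.logb 2 ((n : ℝ) + 1))⌉₊ - 1))
        atTop (nhds 0) := by
  have hx : Tendsto (fun n : ℕ => Real.logb 2 ((n : ℝ) + 1)) atTop atTop :=
    (Real.tendsto_logb_atTop (by norm_num)).comp
      (tendsto_atTop_add_const_right _ 1 tendsto_natCast_atTop_atTop)
  have hy : Tendsto (fun n : ℕ => Real.logb 2 (Real.logb 2 ((n : ℝ) + 1))) atTop atTop :=
    (Real.tendsto_logb_atTop (by norm_num)).comp hx
  refine ⟨fun n => -(Real.logb 2 (3 + Real.logb 2 (Real.logb 2 ((n : ℝ) + 1))) /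
    Real.logb 2 (Real.logb 2 ((n : ℝ) + 1))), ?_, ?_⟩
  · have := (PZF.tendsto_ratio.comp hy).neg
    rw [neg_zero] at this
    exact this
  · have hlim : Tendsto (fun x : ℝ => Real.exp (-x) * x) atTop (nhds 0) := by
      have := Real.tendsto_pow_mul_exp_neg_atTop_nhds_zero 1
      refine this.congr fun x => ?_
      rw [pow_one, mul_comm]
    refine tendsto_of_tendsto_of_tendsto_of_le_of_le' tendsto_const_nhds (hlim.comp hx) ?_ ?_
    · exact Eventually.of_forall fun n => PZF.prMin_nonneg _ _ (hp _).1 (hp _).2 _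
    · filter_upwards [hx.eventually_ge_atTop 3, hy.eventually_gt_atTop 0,
        (PZF.tendsto_zfun.comp hy).eventually_gt_atTop 0] with n h1 h2 h3
      have h4 := PZF.final_est (n + 1) (p (n + 1)) (hp _).1 (hp _).2 (Nat.succ_pos n)
        (Real.logb 2 ((n : ℝ) + 1)) _ _ (by push_cast; rfl) rfl rfl h1 h2 h3
      have h5 : (1 + -(Real.logb 2 (3 + Real.logb 2 (Real.logb 2 ((n : ℝ) + 1))) /
          Real.logb 2 (Real.logb 2 ((n : ℝ) + 1)))) * Real.logb 2 (Real.logb 2 ((n : ℝ) + 1)) =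
          Real.logb 2 (Real.logb 2 ((n : ℝ) + 1)) -
            Real.logb 2 (3 + Real.logb 2 (Real.logb 2 ((n : ℝ) + 1))) := by
        have := h2.ne'
        field_simp
        ring
      rw [h5]
      exact h4
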